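/- (Lemma 1: two layers of maximum-weight checks detect all weight-one Kraus errors.) Let n : ℕ, k : Fin n, and A : Matrix (Fin 2) (Fin 2) ℂ, and let E be the weight-one operator acting as A on qubit k: the matrix indexed by (Fin n → Fin 2) with entries E f g = A (f k) (g k) * ∏_{i ≠ k} (if f i = g i then 1 else 0). Let X⁽ⁿ⁾ = P_{fun _ => 1} and Z⁽ⁿ⁾ = P_{fun _ => 3}. Then applying the two check layers gives (Z⁽ⁿ⁾ * M * Z⁽ⁿ⁾ + M)/2 = ((trace A)/2) • 1, where M = (X⁽ⁿ⁾ * E * X⁽ⁿ⁾ + E)/2. That is, the two checks X^{⊗n} and Z^{⊗n} reduce every weight-one Kraus operator to a scalar multiple of the identity. -/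

import Mathlib

open Matrix Complex Kronecker

noncomputable def pauli : Fin 4 → Matrix (Fin 2) (Fin 2) ℂ
  | 0 => !![1, 0; 0, 1]
  | 1 => !![0, 1; 1, 0]
  | 2 => !![0, -Complex.I; Complex.I, 0]
  | 3 => !![1, 0; 0, -1]

noncomputable def PauliString {n : ℕ} (a : Fin n → Fin 4) :
    Matrix (Fin n → Fin 2) (Fin n → Fin 2) ℂ :=
  Matrix.of fun f g => ∏ i, pauli (a i) (f i) (g i)

/-!
Conjugation by a tensor product of involutions acts factor by factor, so a Pauli check sends a
weight-one operator at qubit `k` to a weight-one operator at `k`, and everything reduces to a single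
qubit. There, expand `A` in the Pauli basis: a check fixes the Paulis commuting with it and kills
those anticommuting with it, and the identity is the only Pauli commuting with two distinct
non-identity Paulis. Its coefficient is `trace A / 2`.
-/

/-- The tensor product of a finite family of matrices, as a multilinear map in the family; rows
and columns are indexed by dependent functions, so no ordering of the factors is chosen. -/
def piKronecker {R ι : Type*} [CommSemiring R] [Fintype ι] {l m : ι → Type*} :
    MultilinearMap R (fun i => Matrix (l i) (m i) R) (Matrix (∀ i, l i) (∀ i, m i) R) :=
  (Matrix.ofLinearEquiv R).toLinearMap.compMultilinearMap <| .pi fun f => .pi fun g =>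
    (MultilinearMap.mkPiAlgebra R ι R).compLinearMap fun i => entryLinearMap R R (f i) (g i)

section PiKronecker

variable {R ι : Type*} [CommSemiring R] [Fintype ι] {l m p : ι → Type*}

lemma piKronecker_apply (B : ∀ i, Matrix (l i) (m i) R) (f : ∀ i, l i) (g : ∀ i, m i) :
    piKronecker B f g = ∏ i, B i (f i) (g i) :=
  rfl

lemma piKronecker_one [∀ i, DecidableEq (m i)] :
    piKronecker (1 : ∀ i, Matrix (m i) (m i) R) = 1 := by
  ext f g
  simp only [piKronecker_apply, Pi.one_apply, one_apply, Fintype.prod_ite_zero,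
    Finset.prod_const_one, funext_iff]

variable [DecidableEq ι] [∀ i, Fintype (m i)]

lemma piKronecker_mul (B : ∀ i, Matrix (l i) (m i) R) (C : ∀ i, Matrix (m i) (p i) R) :
    piKronecker B * piKronecker C = piKronecker fun i => B i * C i := by
  ext f g
  simp only [mul_apply, piKronecker_apply, ← Finset.prod_mul_distrib]
  rw [Finset.prod_univ_sum, Fintype.piFinset_univ]

variable [∀ i, DecidableEq (m i)]

/-- The embedding of the matrices on the `k`-th tensor factor as operators of weight one on the
whole product: `A` acts on factor `k`, the identity on all others. Being an algebra homomorphism, it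
transports identities between one-factor operators. -/
def weightOne (k : ι) :
    Matrix (m k) (m k) R →ₐ[R] Matrix (∀ i, m i) (∀ i, m i) R :=
  AlgHom.ofLinearMap (piKronecker.toLinearMap (1 : ∀ i, Matrix (m i) (m i) R) k)
    (by
      change piKronecker (Pi.mulSingle k 1) = 1
      rw [Pi.mulSingle_one, piKronecker_one])
    (fun A B => by
      change piKronecker (Pi.mulSingle k (A * B)) =
        piKronecker (Pi.mulSingle k A) * piKronecker (Pi.mulSingle k B)
      rw [piKronecker_mul, Pi.mulSingle_mul]
      rfl)

lemma weightOne_eq_piKronecker (k : ι) (A : Matrix (m k) (m k) R) :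
    weightOne k A = piKronecker (Pi.mulSingle k A) :=
  rfl

lemma weightOne_apply (k : ι) (A : Matrix (m k) (m k) R) (f g : ∀ i, m i) :
    weightOne k A f g =
      A (f k) (g k) * ∏ i ∈ Finset.univ.erase k, if f i = g i then 1 else 0 := by
  rw [weightOne_eq_piKronecker, piKronecker_apply,
    ← Finset.mul_prod_erase _ _ (Finset.mem_univ k), Pi.mulSingle_eq_same]
  congr 1
  refine Finset.prod_congr rfl fun i hi => ?_
  rw [Pi.mulSingle_eq_of_ne (Finset.ne_of_mem_erase hi), one_apply]

lemma piKronecker_mul_weightOne_mul_piKronecker {Q : ∀ i, Matrix (m i) (m i) R} {k : ι}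
    (hQ : ∀ i ≠ k, Q i * Q i = 1) (A : Matrix (m k) (m k) R) :
    piKronecker Q * weightOne k A * piKronecker Q = weightOne k (Q k * A * Q k) := by
  simp only [weightOne_eq_piKronecker, piKronecker_mul]
  congr 1
  funext i
  obtain rfl | hi := eq_or_ne i k
  · simp only [Pi.mulSingle_eq_same]
  · simp only [Pi.mulSingle_eq_of_ne hi, mul_one, hQ i hi]

end PiKronecker

/-- One layer of check sandwiching with check `Q`, postselected on ancilla outcome `0`: the linear
map `M ↦ (Q * M * Q + M) / 2` on Kraus operators, in an arbitrary algebra.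
It is `0` in characteristic two, where `1 / 2 = 0`. -/
def checkMap (K : Type*) {S : Type*} [Field K] [Ring S] [Algebra K S] (Q : S) : S →ₗ[K] S :=
  (1 / 2 : K) • (LinearMap.mulLeftRight K (Q, Q) + LinearMap.id)

section CheckMap

variable {K S : Type*} [Field K] [Ring S] [Algebra K S] {Q M : S}

lemma checkMap_apply (Q M : S) : checkMap K Q M = (1 / 2 : K) • (Q * M * Q + M) :=
  rfl

lemma checkMap_of_commute [NeZero (2 : K)] (hQ : Q * Q = 1) (h : Commute Q M) :
    checkMap K Q M = M := by
  rw [checkMap_apply, h.eq, mul_assoc, hQ, mul_one, ← two_smul K M, smul_smul,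
    one_div_mul_cancel two_ne_zero, one_smul]

lemma checkMap_of_anticommute (hQ : Q * Q = 1) (h : Q * M = -(M * Q)) : checkMap K Q M = 0 := by
  rw [checkMap_apply, h, neg_mul, mul_assoc, hQ, mul_one, neg_add_cancel, smul_zero]

lemma checkMap_piKronecker_weightOne {ι : Type*} [Fintype ι] [DecidableEq ι] {m : ι → Type*}
    [∀ i, Fintype (m i)] [∀ i, DecidableEq (m i)] {Q : ∀ i, Matrix (m i) (m i) K} {k : ι}
    (hQ : ∀ i ≠ k, Q i * Q i = 1) (A : Matrix (m k) (m k) K) :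
    checkMap K (piKronecker Q) (weightOne k A) = weightOne k (checkMap K (Q k) A) := by
  simp only [checkMap_apply, piKronecker_mul_weightOne_mul_piKronecker hQ, map_smul, map_add]

end CheckMap

section Pauli

lemma pauli_zero : pauli 0 = 1 :=
  one_fin_two.symm

lemma pauli_mul_self (a : Fin 4) : pauli a * pauli a = 1 := by
  fin_cases a <;> simp [pauli, one_fin_two]

lemma pauli_anticommute {a b : Fin 4} (ha : a ≠ 0) (hb : b ≠ 0) (hab : a ≠ b) :
    pauli a * pauli b = -(pauli b * pauli a) := by
  fin_cases a <;> fin_cases b <;> simp_all [pauli]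

lemma eq_sum_trace_pauli_mul_smul_pauli (A : Matrix (Fin 2) (Fin 2) ℂ) :
    A = ∑ c, (trace (pauli c * A) / 2) • pauli c := by
  ext i j
  fin_cases i <;> fin_cases j <;>
    simp [Fin.sum_univ_four, pauli, trace_fin_two, mul_apply] <;> grind [I_mul_I]

lemma checkMap_pauli_checkMap_pauli_of_ne_zero {a b c : Fin 4} (ha : a ≠ 0) (hb : b ≠ 0)
    (hab : a ≠ b) (hc : c ≠ 0) : checkMap ℂ (pauli b) (checkMap ℂ (pauli a) (pauli c)) = 0 := by
  obtain rfl | hac := eq_or_ne a c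
  · rw [checkMap_of_commute (pauli_mul_self a) (Commute.refl _),
      checkMap_of_anticommute (pauli_mul_self b) (pauli_anticommute hb ha hab.symm)]
  · rw [checkMap_of_anticommute (pauli_mul_self a) (pauli_anticommute ha hc hac), map_zero]

lemma checkMap_pauli_checkMap_pauli {a b : Fin 4} (ha : a ≠ 0) (hb : b ≠ 0) (hab : a ≠ b)
    (A : Matrix (Fin 2) (Fin 2) ℂ) :
    checkMap ℂ (pauli b) (checkMap ℂ (pauli a) A) = (trace A / 2) • 1 := by
  have fixes_one (d : Fin 4) : checkMap ℂ (pauli d) 1 = 1 :=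
    checkMap_of_commute (pauli_mul_self d) (Commute.one_right _)
  conv_lhs => rw [eq_sum_trace_pauli_mul_smul_pauli A]
  simp only [map_sum, map_smul]
  rw [Fintype.sum_eq_single 0 fun c hc => by
      rw [checkMap_pauli_checkMap_pauli_of_ne_zero ha hb hab hc, smul_zero],
    pauli_zero, one_mul, fixes_one, fixes_one]

lemma checkMap_pauliString_weightOne {n : ℕ} (a : Fin n → Fin 4) (k : Fin n)
    (A : Matrix (Fin 2) (Fin 2) ℂ) :
    checkMap ℂ (PauliString a) (weightOne k A) = weightOne k (checkMap ℂ (pauli (a k)) A) :=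
  checkMap_piKronecker_weightOne (Q := fun i => pauli (a i)) (fun i _ => pauli_mul_self (a i)) A

end Pauli

theorem two_max_weight_checks_detect_weight_one_errors_general {n : ℕ} {k : Fin n}
    {a b : Fin n → Fin 4} (ha : a k ≠ 0) (hb : b k ≠ 0) (hab : a k ≠ b k)
    (A : Matrix (Fin 2) (Fin 2) ℂ) :
    checkMap ℂ (PauliString b) (checkMap ℂ (PauliString a) (weightOne k A)) =
      (trace A / 2) • (1 : Matrix (Fin n → Fin 2) (Fin n → Fin 2) ℂ) := by
  rw [checkMap_pauliString_weightOne, checkMap_pauliString_weightOne,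
    checkMap_pauli_checkMap_pauli ha hb hab, map_smul, map_one]

theorem two_max_weight_checks_detect_weight_one_errors (n : ℕ) (k : Fin n)
    (A : Matrix (Fin 2) (Fin 2) ℂ) :
    let E : Matrix (Fin n → Fin 2) (Fin n → Fin 2) ℂ :=
      Matrix.of fun f g =>
        A (f k) (g k) * ∏ i ∈ Finset.univ.erase k, (if f i = g i then (1 : ℂ) else 0)
    let Xn : Matrix (Fin n → Fin 2) (Fin n → Fin 2) ℂ :=
      PauliString (fun _ : Fin n => (1 : Fin 4))
    let Zn : Matrix (Fin n → Fin 2) (Fin n → Fin 2) ℂ :=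
      PauliString (fun _ : Fin n => (3 : Fin 4))
    let M : Matrix (Fin n → Fin 2) (Fin n → Fin 2) ℂ :=
      ((1 : ℂ) / 2) • (Xn * E * Xn + E)
    ((1 : ℂ) / 2) • (Zn * M * Zn + M) =
      (Matrix.trace A / 2) • (1 : Matrix (Fin n → Fin 2) (Fin n → Fin 2) ℂ) := by
  intro E Xn Zn M
  have hE : E = weightOne k A := by
    ext f g
    exact (weightOne_apply k A f g).symm
  simp only [M, hE]
  exact two_max_weight_checks_detect_weight_one_errors_general (by decide) (by decide) (by decide) A
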